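/- For any two states ω¹, ω² of a finite-dimensional bipartite system AB with ε = ½‖ω¹−ω²‖₁ < 1, the quantum mutual information satisfies |I(A:B)_{ω¹} − I(A:B)_{ω²}| ≤ 2ε log(dim H_A) + 3(1+ε)·h₂(ε/(1+ε)). -/

import Mathlib

open Matrix
open scoped ComplexOrder

noncomputable section

/-- The von Neumann entropy, extended to the cone of positive trace-class operators by
`H(ρ) = Tr η(ρ) − η(Tr ρ)` with `η(x) = −x log x` (computed spectrally). -/
def vnEnt {n : Type*} [Fintype n] [DecidableEq n] (ρ : Matrix n n ℂ) : ℝ :=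
  if h : ρ.IsHermitian then
    (∑ i, Real.negMulLog (h.eigenvalues i)) - Real.negMulLog (∑ i, h.eigenvalues i)
  else 0

/-- A state (density operator): positive semidefinite with unit trace. -/
def IsState {n : Type*} [Fintype n] (ρ : Matrix n n ℂ) : Prop :=
  ρ.PosSemidef ∧ ρ.trace = 1

/-- Partial trace over the second tensor factor. -/
def mFst {a b : Type*} [Fintype b] (ω : Matrix (a × b) (a × b) ℂ) : Matrix a a ℂ :=
  Matrix.of fun i j => ∑ k : b, ω (i, k) (j, k)

/-- Partial trace over the first tensor factor. -/
def mSnd {a b : Type*} [Fintype a] (ω : Matrix (a × b) (a × b) ℂ) : Matrix b b ℂ :=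
  Matrix.of fun i j => ∑ k : a, ω (k, i) (k, j)

/-- The trace norm of a matrix: the sum of its singular values. -/
def traceNorm {n : Type*} [Fintype n] [DecidableEq n] (M : Matrix n n ℂ) : ℝ :=
  ∑ i, Real.sqrt ((Matrix.posSemidef_conjTranspose_mul_self M).1.eigenvalues i)

/-- Quantum mutual information `I(A:B)_ω = H(ω_A) + H(ω_B) − H(ω_AB)`. -/
def mutInf {a b : Type*} [Fintype a] [DecidableEq a] [Fintype b] [DecidableEq b]
    (ω : Matrix (a × b) (a × b) ℂ) : ℝ :=
  vnEnt (mFst ω) + vnEnt (mSnd ω) - vnEnt ω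

/-!
Let `ω₁ - ω₂ = P - N` be the Jordan decomposition. Both parts have trace `ε = ½‖ω₁ - ω₂‖₁`, and
`ω₁ + N = ω₂ + P`. On positive operators the mutual information is almost additive:
`I(ω + σ)` differs from `I(ω) + I(σ)` by at most `2h` upwards and `h` downwards, where
`h = (1 + ε) h₂(ε / (1 + ε))` is the entropy of mixing weights `1` and `ε`. Expanding the mutual
information of `ω₁ + N = ω₂ + P` in both ways gives `I(ω₁) - I(ω₂) ≤ I(P) - I(N) + 3h`, and
`0 ≤ I(N)` (subadditivity of the entropy), `I(P) ≤ 2 ε log dim H_A` (Araki–Lieb).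

The quantum entropy inequalities are reduced to classical ones by measurement: the entropy of an
operator is the least Shannon entropy among the distributions of its diagonal in an orthonormal
basis, and it is attained in an eigenbasis.
-/

section ShannonEntropy

open Real

variable {ι κ : Type*} [Fintype ι] [Fintype κ]

/-- The Shannon entropy of a nonnegative vector, in the homogeneous normalization that `vnEnt`
uses: `∑ η(pᵢ) − η(∑ pᵢ)` with `η(x) = −x log x`. For probability vectors the second term
vanishes. -/
def shannonEnt (p : ι → ℝ) : ℝ :=
  ∑ i, negMulLog (p i) - negMulLog (∑ i, p i)

lemma negMulLog_le_neg_mul_log_add_sub {p x : ℝ} (hp : 0 ≤ p) (hx : 0 ≤ x) (hpx : x = 0 → p = 0) :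
    negMulLog p ≤ -(p * log x) + (x - p) := by
  obtain rfl | hp := hp.eq_or_lt
  · simpa using hx
  have hx : 0 < x := hx.lt_of_ne' fun h => hp.ne' (hpx h)
  have hlog : p * log (x / p) ≤ p * (x / p - 1) :=
    mul_le_mul_of_nonneg_left (log_le_sub_one_of_pos (by positivity)) hp.le
  rw [log_div hx.ne' hp.ne', mul_sub, mul_sub, mul_div_cancel₀ _ hp.ne'] at hlog
  rw [negMulLog]
  linarith

/-- **Gibbs' inequality**, from `log x ≤ x - 1` after rescaling `q` to the total mass of `p`. -/
lemma shannonEnt_le_sum_mul_log_sub_log {p q : ι → ℝ} (hp : ∀ i, 0 ≤ p i) (hq : ∀ i, 0 ≤ q i)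
    (hpq : ∀ i, q i = 0 → p i = 0) :
    shannonEnt p ≤ ∑ i, p i * (log (∑ j, q j) - log (q i)) := by
  set P := ∑ i, p i with hP
  set Q := ∑ i, q i with hQ
  have hP₀ : 0 ≤ P := Finset.sum_nonneg fun i _ => hp i
  have hQ₀ : 0 ≤ Q := Finset.sum_nonneg fun i _ => hq i
  have pos_of_ne {i} (hi : p i ≠ 0) : 0 < P ∧ 0 < q i ∧ 0 < Q := by
    have hqi : 0 < q i := (hq i).lt_of_ne' (mt (hpq i) hi)
    exact ⟨((hp i).lt_of_ne' hi).trans_le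
        (Finset.single_le_sum (fun j _ => hp j) (Finset.mem_univ i)),
      hqi, hqi.trans_le (Finset.single_le_sum (fun j _ => hq j) (Finset.mem_univ i))⟩
  have pointwise (i : ι) : negMulLog (p i) ≤
      p i * (log Q - log (q i)) - p i * log P + (q i * (P / Q) - p i) := by
    obtain hi | hi := eq_or_ne (p i) 0
    · have : 0 ≤ q i * (P / Q) := mul_nonneg (hq i) (div_nonneg hP₀ hQ₀)
      simpa [hi] using this
    obtain ⟨hP, hqi, hQ⟩ := pos_of_ne hi
    have := negMulLog_le_neg_mul_log_add_sub (x := q i * (P / Q)) (hp i) (by positivity)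
      fun h => absurd h (by positivity)
    rw [log_mul hqi.ne' (by positivity), log_div hP.ne' hQ.ne'] at this
    linarith
  have sum_rescaled : ∑ i, q i * (P / Q) = P := by
    rw [← Finset.sum_mul, ← hQ, mul_div_cancel_of_imp']
    intro h
    exact Finset.sum_eq_zero fun i _ => by_contra fun hi => (pos_of_ne hi).2.2.ne' h
  have := Finset.sum_le_sum fun i (_ : i ∈ Finset.univ) => pointwise i
  rw [Finset.sum_add_distrib, Finset.sum_sub_distrib, Finset.sum_sub_distrib, sum_rescaled,
    ← Finset.sum_mul, ← hP] at this
  rw [shannonEnt, ← hP, negMulLog]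
  linarith

lemma shannonEnt_le_sum_mul_log_card {p : ι → ℝ} (hp : ∀ i, 0 ≤ p i) :
    shannonEnt p ≤ (∑ i, p i) * log (Fintype.card ι) := by
  simpa [Finset.sum_mul] using
    shannonEnt_le_sum_mul_log_sub_log (q := fun _ => 1) hp (fun _ => zero_le_one) (by simp)

/-- Concavity of the entropy; for a homogeneous function it amounts to superadditivity. -/
lemma sum_shannonEnt_le {p : κ → ι → ℝ} (hp : ∀ k i, 0 ≤ p k i) :
    ∑ k, shannonEnt (p k) ≤ shannonEnt fun i => ∑ k, p k i := by
  set q : ι → ℝ := fun i => ∑ k, p k i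
  have hq (i : ι) : 0 ≤ q i := Finset.sum_nonneg fun k _ => hp k i
  have hpq (k : κ) (i : ι) (hi : q i = 0) : p k i = 0 :=
    (Finset.sum_eq_zero_iff_of_nonneg fun k _ => hp k i).1 hi k (Finset.mem_univ k)
  calc ∑ k, shannonEnt (p k)
      ≤ ∑ k, ∑ i, p k i * (log (∑ j, q j) - log (q i)) :=
        Finset.sum_le_sum fun k _ => shannonEnt_le_sum_mul_log_sub_log (hp k) hq (hpq k)
    _ = ∑ i, q i * (log (∑ j, q j) - log (q i)) := by
        rw [Finset.sum_comm]
        simp only [← Finset.sum_mul, q]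
    _ = shannonEnt q := by
        simp only [shannonEnt, negMulLog, mul_sub, Finset.sum_sub_distrib, ← Finset.sum_mul,
          neg_mul, Finset.sum_neg_distrib]
        ring

lemma shannonEnt_add_shannonEnt_le {p q : ι → ℝ} (hp : ∀ i, 0 ≤ p i) (hq : ∀ i, 0 ≤ q i) :
    shannonEnt p + shannonEnt q ≤ shannonEnt (p + q) := by
  have := sum_shannonEnt_le (p := ![p, q]) (by simp [Fin.forall_fin_two, hp, hq])
  simpa [Fin.sum_univ_two, Pi.add_def] using this

lemma sum_le_sum_mulVec_of_concaveOn {n : Type*} [Fintype n] [DecidableEq n] {f : ℝ → ℝ}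
    {s : Set ℝ} {D : Matrix n n ℝ} {x : n → ℝ} (hf : ConcaveOn ℝ s f)
    (hD : D ∈ doublyStochastic ℝ n) (hx : ∀ i, x i ∈ s) :
    ∑ i, f (x i) ≤ ∑ i, f ((D *ᵥ x) i) :=
  calc ∑ j, f (x j) = ∑ i, ∑ j, D i j * f (x j) := by
        rw [Finset.sum_comm]
        simp only [← Finset.sum_mul, sum_col_of_mem_doublyStochastic hD, one_mul]
    _ ≤ ∑ i, f ((D *ᵥ x) i) := Finset.sum_le_sum fun i _ =>
        hf.le_map_sum (fun _ _ => nonneg_of_mem_doublyStochastic hD)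
          (sum_row_of_mem_doublyStochastic hD i) fun j _ => hx j

lemma shannonEnt_le_shannonEnt_mulVec [DecidableEq ι] {D : Matrix ι ι ℝ} {p : ι → ℝ}
    (hD : D ∈ doublyStochastic ℝ ι) (hp : ∀ i, 0 ≤ p i) :
    shannonEnt p ≤ shannonEnt (D *ᵥ p) := by
  rw [shannonEnt, shannonEnt, sum_mulVec_of_mem_doublyStochastic hD]
  exact sub_le_sub_right (sum_le_sum_mulVec_of_concaveOn concaveOn_negMulLog hD hp) _

lemma shannonEnt_prod (p : ι × κ → ℝ) :
    shannonEnt p = shannonEnt (fun i => ∑ k, p (i, k)) + ∑ i, shannonEnt fun k => p (i, k) := by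
  simp only [shannonEnt, Fintype.sum_prod_type, Finset.sum_sub_distrib]
  ring

lemma shannonEnt_le_add_marginals {p : ι × κ → ℝ} (hp : ∀ x, 0 ≤ p x) :
    shannonEnt p ≤ shannonEnt (fun i => ∑ k, p (i, k)) + shannonEnt fun k => ∑ i, p (i, k) := by
  rw [shannonEnt_prod]
  gcongr
  exact sum_shannonEnt_le fun i k => hp (i, k)

lemma shannonEnt_sumElim (p : ι → ℝ) (q : κ → ℝ) :
    shannonEnt (Sum.elim p q) = shannonEnt p + shannonEnt q + shannonEnt ![∑ i, p i, ∑ k, q k] := by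
  simp only [shannonEnt, Fintype.sum_sum_type, Sum.elim_inl, Sum.elim_inr, Fin.sum_univ_two,
    cons_val_zero, cons_val_one]
  ring

lemma shannonEnt_pair (r s : ℝ) : shannonEnt ![r, s] = (r + s) * binEntropy (s / (r + s)) := by
  simp only [shannonEnt, Fin.sum_univ_two, cons_val_zero, cons_val_one]
  obtain hrs | hrs := eq_or_ne (r + s) 0
  · obtain rfl := eq_neg_of_add_eq_zero_right hrs
    simp [negMulLog]
  have hcompl : 1 - s / (r + s) = r / (r + s) := by field_simp; ring
  rw [binEntropy_eq_negMulLog_add_negMulLog_one_sub, hcompl]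
  have rescale (x : ℝ) : (r + s) * negMulLog (x / (r + s)) = negMulLog x + x * log (r + s) := by
    obtain rfl | hx := eq_or_ne x 0
    · simp
    rw [negMulLog, negMulLog, log_div hx hrs]
    field_simp
    ring
  rw [mul_add, rescale, rescale]
  simp only [negMulLog]
  ring

end ShannonEntropy

section Spectrum

variable {𝕜 m n : Type*} [RCLike 𝕜] [Fintype m] [DecidableEq m] [Fintype n] [DecidableEq n]

lemma norm_sq_mem_doublyStochastic {U : Matrix n n 𝕜} (hU : U ∈ unitaryGroup n 𝕜) :
    (of fun i j => ‖U i j‖ ^ 2) ∈ doublyStochastic ℝ n := by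
  have row_sum {V : Matrix n n 𝕜} (hV : V ∈ unitaryGroup n 𝕜) (i : n) :
      ∑ j, ‖V i j‖ ^ 2 = 1 := by
    have := congrFun₂ (mem_unitaryGroup_iff.1 hV) i i
    simp only [mul_apply, star_apply, one_apply_eq, RCLike.star_def, RCLike.mul_conj] at this
    exact_mod_cast this
  refine mem_doublyStochastic_iff_sum.2 ⟨fun i j => sq_nonneg _, row_sum hU, fun j => ?_⟩
  simpa [star_apply] using row_sum (Unitary.star_mem hU) j

lemma sum_map_eigenvalues_eq_sum_roots_charpoly (f : ℝ → ℝ) {A : Matrix n n 𝕜}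
    (hA : A.IsHermitian) :
    ∑ i, f (hA.eigenvalues i) = (A.charpoly.roots.map fun z => f (RCLike.re z)).sum := by
  simp [hA.roots_charpoly_eq_eigenvalues]

/-- `A * B` and `B * A` have the same nonzero eigenvalues, even when `m` and `n` differ. -/
lemma sum_map_eigenvalues_mul_comm {f : ℝ → ℝ} (hf : f 0 = 0) {A : Matrix m n 𝕜}
    {B : Matrix n m 𝕜} (hAB : (A * B).IsHermitian) (hBA : (B * A).IsHermitian) :
    ∑ i, f (hAB.eigenvalues i) = ∑ j, f (hBA.eigenvalues j) := by
  open Polynomial in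
  have roots_X_pow_mul (k : ℕ) {p : 𝕜[X]} (hp : p.Monic) :
      (X ^ k * p).roots = k • {0} + p.roots := by
    rw [roots_mul (mul_ne_zero (pow_ne_zero _ X_ne_zero) hp.ne_zero), roots_X_pow]
  have := congrArg (fun p => (p.roots.map fun z => f (RCLike.re z)).sum) (charpoly_mul_comm' A B)
  simpa [sum_map_eigenvalues_eq_sum_roots_charpoly, roots_X_pow_mul, charpoly_monic,
    Multiset.map_nsmul, Multiset.sum_nsmul, hf] using this

lemma trace_cfc_eq_sum {A : Matrix n n 𝕜} (hA : A.IsHermitian) (f : ℝ → ℝ) :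
    (cfc f A).trace = ∑ i, (f (hA.eigenvalues i) : 𝕜) := by
  rw [hA.cfc_eq, IsHermitian.cfc, Unitary.conjStarAlgAut_apply, trace_mul_comm, ← Matrix.mul_assoc,
    Unitary.coe_star_mul_self, Matrix.one_mul, trace_diagonal]
  rfl

end Spectrum

section JordanDecomposition

open scoped MatrixOrder Matrix.Norms.L2Operator

variable {n : Type*} [Fintype n] {M : Matrix n n ℂ}

lemma exists_eq_mul_conjTranspose_of_posSemidef (hM : M.PosSemidef) :
    ∃ B : Matrix n n ℂ, M = B * Bᴴ := by
  classical exact CStarAlgebra.nonneg_iff_eq_mul_star_self.1 hM.nonneg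

variable [DecidableEq n]

lemma traceNorm_eq_trace_abs (M : Matrix n n ℂ) : traceNorm M = (CFC.abs M).trace.re := by
  rw [CFC.abs, CFC.sqrt_eq_real_sqrt _ (star_mul_self_nonneg M), cfcₙ_eq_cfc,
    star_eq_conjTranspose, trace_cfc_eq_sum (posSemidef_conjTranspose_mul_self M).1]
  simp [traceNorm]

lemma exists_posSemidef_sub_eq_of_trace_eq_zero (hM : M.IsHermitian) (htr : M.trace = 0) :
    ∃ P N : Matrix n n ℂ, P.PosSemidef ∧ N.PosSemidef ∧ P - N = M ∧
      P.trace.re = traceNorm M / 2 ∧ N.trace.re = traceNorm M / 2 := by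
  have hpos := congrArg (fun A => A.trace.re) (CFC.abs_add_self M hM)
  have hneg := congrArg (fun A => A.trace.re) (CFC.abs_sub_self M hM)
  simp only [trace_add, trace_sub, htr, add_zero, sub_zero, ← traceNorm_eq_trace_abs, two_smul,
    Complex.add_re] at hpos hneg
  refine ⟨M⁺, M⁻, (CFC.posPart_nonneg M).posSemidef, (CFC.negPart_nonneg M).posSemidef,
    CFC.posPart_sub_negPart M hM, ?_, ?_⟩ <;> linarith

end JordanDecomposition

section VonNeumannEntropy

variable {m n : Type*} [Fintype m] [Fintype n]

/-- The (unnormalized) outcome distribution of measuring `M` in the orthonormal basis formed by the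
columns of `U`. -/
def bornDist (U M : Matrix n n ℂ) (i : n) : ℝ :=
  ((Uᴴ * M * U) i i).re

lemma bornDist_nonneg {M : Matrix n n ℂ} (hM : M.PosSemidef) (U : Matrix n n ℂ) (i : n) :
    0 ≤ bornDist U M i :=
  (Complex.le_def.1 (hM.conjTranspose_mul_mul_same U).diag_nonneg).1

lemma bornDist_add (U M N : Matrix n n ℂ) : bornDist U (M + N) = bornDist U M + bornDist U N := by
  ext i
  simp [bornDist, Matrix.mul_add, Matrix.add_mul]

variable [DecidableEq m] [DecidableEq n]

lemma sum_bornDist {U : Matrix n n ℂ} (hU : U ∈ unitaryGroup n ℂ) (M : Matrix n n ℂ) :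
    ∑ i, bornDist U M i = M.trace.re := by
  simp only [bornDist, ← Complex.re_sum]
  change (Uᴴ * M * U).trace.re = _
  rw [trace_mul_comm, ← Matrix.mul_assoc, ← star_eq_conjTranspose, mem_unitaryGroup_iff.1 hU,
    Matrix.one_mul]

lemma bornDist_eq_mulVec_eigenvalues {M : Matrix n n ℂ} (hM : M.IsHermitian) (U : Matrix n n ℂ) :
    bornDist U M =
      (of fun i j => ‖(Uᴴ * (hM.eigenvectorUnitary : Matrix n n ℂ)) i j‖ ^ 2) *ᵥ
        hM.eigenvalues := by
  ext i
  let V : Matrix n n ℂ := hM.eigenvectorUnitary.val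
  have spectral : Uᴴ * M * U =
      (Uᴴ * V) * diagonal (fun j => (hM.eigenvalues j : ℂ)) * (Uᴴ * V)ᴴ := by
    conv_lhs => rw [hM.spectral_theorem, Unitary.conjStarAlgAut_apply]
    simp only [conjTranspose_mul, conjTranspose_conjTranspose, Matrix.mul_assoc]
    rfl
  rw [bornDist, spectral, mul_apply, Complex.re_sum, mulVec, dotProduct]
  refine Finset.sum_congr rfl fun j _ => ?_
  rw [mul_diagonal, conjTranspose_apply, mul_right_comm, of_apply, RCLike.star_def, RCLike.mul_conj]
  exact_mod_cast Complex.re_ofReal_mul _ _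

lemma vnEnt_eq_shannonEnt_eigenvalues {M : Matrix n n ℂ} (hM : M.IsHermitian) :
    vnEnt M = shannonEnt hM.eigenvalues :=
  dif_pos hM

lemma vnEnt_le_shannonEnt_bornDist {M U : Matrix n n ℂ} (hM : M.PosSemidef)
    (hU : U ∈ unitaryGroup n ℂ) : vnEnt M ≤ shannonEnt (bornDist U M) := by
  rw [vnEnt_eq_shannonEnt_eigenvalues hM.1, bornDist_eq_mulVec_eigenvalues hM.1]
  exact shannonEnt_le_shannonEnt_mulVec
    (norm_sq_mem_doublyStochastic (mul_mem (Unitary.star_mem hU) hM.1.eigenvectorUnitary.2))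
    hM.eigenvalues_nonneg

lemma exists_unitary_vnEnt_eq {M : Matrix n n ℂ} (hM : M.IsHermitian) :
    ∃ U ∈ unitaryGroup n ℂ, vnEnt M = shannonEnt (bornDist U M) := by
  refine ⟨hM.eigenvectorUnitary, hM.eigenvectorUnitary.2, ?_⟩
  rw [vnEnt_eq_shannonEnt_eigenvalues hM, bornDist_eq_mulVec_eigenvalues hM,
    ← star_eq_conjTranspose, Unitary.coe_star_mul_self]
  congr 1
  ext i
  simp [mulVec, dotProduct, one_apply, ite_pow, apply_ite]

lemma vnEnt_mul_conjTranspose_comm (X : Matrix m n ℂ) : vnEnt (X * Xᴴ) = vnEnt (Xᴴ * X) := by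
  have h₁ := isHermitian_mul_conjTranspose_self X
  have h₂ := isHermitian_conjTranspose_mul_self X
  rw [vnEnt_eq_shannonEnt_eigenvalues h₁, vnEnt_eq_shannonEnt_eigenvalues h₂, shannonEnt,
    shannonEnt, sum_map_eigenvalues_mul_comm Real.negMulLog_zero h₁ h₂,
    sum_map_eigenvalues_mul_comm (f := fun x => x) rfl h₁ h₂]

lemma vnEnt_transpose {M : Matrix n n ℂ} (hM : M.IsHermitian) : vnEnt Mᵀ = vnEnt M := by
  rw [vnEnt_eq_shannonEnt_eigenvalues hM, vnEnt_eq_shannonEnt_eigenvalues hM.transpose,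
    (IsHermitian.eigenvalues_eq_eigenvalues_iff hM.transpose hM).2 (charpoly_transpose M)]

lemma vnEnt_le_trace_mul_log_card {M : Matrix n n ℂ} (hM : M.PosSemidef) :
    vnEnt M ≤ M.trace.re * Real.log (Fintype.card n) := by
  obtain ⟨U, hU, hent⟩ := exists_unitary_vnEnt_eq hM.1
  rw [hent, ← sum_bornDist hU]
  exact shannonEnt_le_sum_mul_log_card (bornDist_nonneg hM U)

lemma vnEnt_add_vnEnt_le {M N : Matrix n n ℂ} (hM : M.PosSemidef) (hN : N.PosSemidef) :
    vnEnt M + vnEnt N ≤ vnEnt (M + N) := by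
  obtain ⟨U, hU, hent⟩ := exists_unitary_vnEnt_eq (hM.add hN).1
  calc vnEnt M + vnEnt N
      ≤ shannonEnt (bornDist U M) + shannonEnt (bornDist U N) :=
        add_le_add (vnEnt_le_shannonEnt_bornDist hM hU) (vnEnt_le_shannonEnt_bornDist hN hU)
    _ ≤ shannonEnt (bornDist U (M + N)) := by
        rw [bornDist_add]
        exact shannonEnt_add_shannonEnt_le (bornDist_nonneg hM U) (bornDist_nonneg hN U)
    _ = vnEnt (M + N) := hent.symm

/-- Measure in a basis that diagonalizes both diagonal blocks. -/
lemma vnEnt_fromBlocks_le {A : Matrix m m ℂ} {B : Matrix m n ℂ} {C : Matrix n m ℂ}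
    {D : Matrix n n ℂ} (h : (fromBlocks A B C D).PosSemidef) :
    vnEnt (fromBlocks A B C D) ≤
      vnEnt A + vnEnt D + shannonEnt ![A.trace.re, D.trace.re] := by
  obtain ⟨hA, -, -, hD⟩ := isHermitian_fromBlocks_iff.1 h.1
  obtain ⟨U, hU, hAent⟩ := exists_unitary_vnEnt_eq hA
  obtain ⟨V, hV, hDent⟩ := exists_unitary_vnEnt_eq hD
  have hUV : fromBlocks U 0 0 V ∈ unitaryGroup (m ⊕ n) ℂ := by
    rw [mem_unitaryGroup_iff, star_eq_conjTranspose] at *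
    simp [fromBlocks_conjTranspose, fromBlocks_multiply, hU, hV]
  have hborn : bornDist (fromBlocks U 0 0 V) (fromBlocks A B C D) =
      Sum.elim (bornDist U A) (bornDist V D) := by
    ext (i | i) <;> simp [bornDist, fromBlocks_conjTranspose, fromBlocks_multiply]
  rw [hAent, hDent, ← sum_bornDist hU, ← sum_bornDist hV, ← shannonEnt_sumElim, ← hborn]
  exact vnEnt_le_shannonEnt_bornDist h hUV

/-- If `ρ = Y Yᴴ` and `σ = Z Zᴴ`, then `ρ + σ = [Y Z] [Y Z]ᴴ` has the entropy of the Gram matrix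
`[Y Z]ᴴ [Y Z]`, whose diagonal blocks `Yᴴ Y` and `Zᴴ Z` have the entropies of `ρ` and `σ`. -/
lemma vnEnt_add_le {ρ σ : Matrix n n ℂ} (hρ : ρ.PosSemidef) (hσ : σ.PosSemidef) :
    vnEnt (ρ + σ) ≤ vnEnt ρ + vnEnt σ + shannonEnt ![ρ.trace.re, σ.trace.re] := by
  obtain ⟨Y, rfl⟩ := exists_eq_mul_conjTranspose_of_posSemidef hρ
  obtain ⟨Z, rfl⟩ := exists_eq_mul_conjTranspose_of_posSemidef hσ
  have hsum : Y * Yᴴ + Z * Zᴴ = fromCols Y Z * (fromCols Y Z)ᴴ := by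
    rw [conjTranspose_fromCols_eq_fromRows_conjTranspose, fromCols_mul_fromRows]
  have hgram : (fromCols Y Z)ᴴ * fromCols Y Z =
      fromBlocks (Yᴴ * Y) (Yᴴ * Z) (Zᴴ * Y) (Zᴴ * Z) := by
    rw [conjTranspose_fromCols_eq_fromRows_conjTranspose, fromRows_mul_fromCols]
  rw [hsum, vnEnt_mul_conjTranspose_comm, hgram, vnEnt_mul_conjTranspose_comm Y,
    vnEnt_mul_conjTranspose_comm Z, trace_mul_comm Y, trace_mul_comm Z]
  exact vnEnt_fromBlocks_le (hgram ▸ posSemidef_conjTranspose_mul_self (fromCols Y Z))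

end VonNeumannEntropy

section PartialTrace

open scoped Kronecker

variable {a b : Type*}

lemma mFst_eq_sum [Fintype b] (ω : Matrix (a × b) (a × b) ℂ) :
    mFst ω = ∑ k, ω.submatrix (·, k) (·, k) := by
  ext i j
  simp [mFst, Matrix.sum_apply]

lemma mSnd_eq_sum [Fintype a] (ω : Matrix (a × b) (a × b) ℂ) :
    mSnd ω = ∑ k, ω.submatrix (k, ·) (k, ·) := by
  ext i j
  simp [mSnd, Matrix.sum_apply]

lemma posSemidef_mFst [Fintype b] {ω : Matrix (a × b) (a × b) ℂ} (hω : ω.PosSemidef) :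
    (mFst ω).PosSemidef := by
  rw [mFst_eq_sum]
  exact posSemidef_sum _ fun k _ => hω.submatrix _

lemma posSemidef_mSnd [Fintype a] {ω : Matrix (a × b) (a × b) ℂ} (hω : ω.PosSemidef) :
    (mSnd ω).PosSemidef := by
  rw [mSnd_eq_sum]
  exact posSemidef_sum _ fun k _ => hω.submatrix _

lemma mFst_add [Fintype b] (ω σ : Matrix (a × b) (a × b) ℂ) :
    mFst (ω + σ) = mFst ω + mFst σ := by
  ext i j
  simp [mFst, Finset.sum_add_distrib]

lemma mSnd_add [Fintype a] (ω σ : Matrix (a × b) (a × b) ℂ) :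
    mSnd (ω + σ) = mSnd ω + mSnd σ := by
  ext i j
  simp [mSnd, Finset.sum_add_distrib]

variable [Fintype a] [Fintype b]

lemma trace_mFst (ω : Matrix (a × b) (a × b) ℂ) : (mFst ω).trace = ω.trace := by
  simp [trace, mFst, Fintype.sum_prod_type]

lemma trace_mSnd (ω : Matrix (a × b) (a × b) ℂ) : (mSnd ω).trace = ω.trace := by
  simp [trace, mSnd, Fintype.sum_prod_type_right]

lemma mFst_kronecker_one_mul [DecidableEq b] (A : Matrix a a ℂ) (ω : Matrix (a × b) (a × b) ℂ) :
    mFst ((A ⊗ₖ 1) * ω) = A * mFst ω := by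
  ext i j
  simp only [mFst, of_apply, mul_apply, kroneckerMap_apply, Fintype.sum_prod_type, one_apply,
    mul_ite, mul_one, mul_zero, ite_mul, zero_mul, Finset.sum_ite_eq, Finset.mem_univ, if_true,
    Finset.mul_sum]
  exact Finset.sum_comm

lemma mFst_mul_kronecker_one [DecidableEq b] (ω : Matrix (a × b) (a × b) ℂ) (A : Matrix a a ℂ) :
    mFst (ω * (A ⊗ₖ 1)) = mFst ω * A := by
  ext i j
  simp only [mFst, of_apply, mul_apply, kroneckerMap_apply, Fintype.sum_prod_type, one_apply,
    mul_ite, mul_one, mul_zero, Finset.sum_ite_eq', Finset.mem_univ, if_true, Finset.sum_mul]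
  exact Finset.sum_comm

lemma mFst_one_kronecker_mul_comm [DecidableEq a] (B : Matrix b b ℂ)
    (ω : Matrix (a × b) (a × b) ℂ) : mFst ((1 ⊗ₖ B) * ω) = mFst (ω * (1 ⊗ₖ B)) := by
  ext i j
  simp only [mFst, of_apply, mul_apply, kroneckerMap_apply, Fintype.sum_prod_type_right, one_apply,
    mul_ite, mul_zero, ite_mul, one_mul, zero_mul, Finset.sum_ite_eq, Finset.sum_ite_eq',
    Finset.mem_univ, if_true]
  rw [Finset.sum_comm]
  simp only [mul_comm]

lemma mFst_kronecker_conj [DecidableEq b] (ω : Matrix (a × b) (a × b) ℂ) (U : Matrix a a ℂ)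
    {V : Matrix b b ℂ} (hV : V ∈ unitaryGroup b ℂ) :
    mFst ((U ⊗ₖ V)ᴴ * ω * (U ⊗ₖ V)) = Uᴴ * mFst ω * U := by
  classical
  have hUV : U ⊗ₖ V = (1 ⊗ₖ V) * (U ⊗ₖ 1) := by simp [← mul_kronecker_mul]
  have hVV : (1 ⊗ₖ V) * (1 ⊗ₖ V)ᴴ = (1 : Matrix (a × b) (a × b) ℂ) := by
    rw [conjTranspose_kronecker, ← mul_kronecker_mul, ← star_eq_conjTranspose V,
      mem_unitaryGroup_iff.1 hV]
    simp
  calc mFst ((U ⊗ₖ V)ᴴ * ω * (U ⊗ₖ V))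
      = mFst ((Uᴴ ⊗ₖ 1) * ((1 ⊗ₖ Vᴴ) * ω * (1 ⊗ₖ V)) * (U ⊗ₖ 1)) := by
        rw [hUV]
        simp only [conjTranspose_mul, conjTranspose_kronecker, conjTranspose_one, Matrix.mul_assoc]
    _ = Uᴴ * mFst (ω * ((1 ⊗ₖ V) * (1 ⊗ₖ V)ᴴ)) * U := by
        rw [mFst_mul_kronecker_one, mFst_kronecker_one_mul, Matrix.mul_assoc (1 ⊗ₖ Vᴴ),
          mFst_one_kronecker_mul_comm, Matrix.mul_assoc ω, conjTranspose_kronecker,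
          conjTranspose_one]
    _ = Uᴴ * mFst ω * U := by rw [hVV, Matrix.mul_one]

lemma sum_bornDist_kronecker_right [DecidableEq b] (ω : Matrix (a × b) (a × b) ℂ)
    (U : Matrix a a ℂ) {V : Matrix b b ℂ} (hV : V ∈ unitaryGroup b ℂ) (i : a) :
    ∑ k, bornDist (U ⊗ₖ V) ω (i, k) = bornDist U (mFst ω) i := by
  simp only [bornDist, ← mFst_kronecker_conj ω U hV, ← Complex.re_sum]
  rfl

lemma sum_bornDist_kronecker_left [DecidableEq a] (ω : Matrix (a × b) (a × b) ℂ)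
    {U : Matrix a a ℂ} (V : Matrix b b ℂ) (hU : U ∈ unitaryGroup a ℂ) (k : b) :
    ∑ i, bornDist (U ⊗ₖ V) ω (i, k) = bornDist V (mSnd ω) k := by
  let swap := Equiv.prodComm b a
  have hswap (i : a) :
      bornDist (U ⊗ₖ V) ω (i, k) = bornDist (V ⊗ₖ U) (ω.submatrix swap swap) (k, i) := by
    have : V ⊗ₖ U = (U ⊗ₖ V).submatrix swap swap := ext fun _ _ => mul_comm _ _
    rw [bornDist, bornDist, this, conjTranspose_submatrix, submatrix_mul_equiv, submatrix_mul_equiv]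
    rfl
  simp only [hswap]
  exact sum_bornDist_kronecker_right (ω.submatrix swap swap) V hU k

variable [DecidableEq a] [DecidableEq b]

/-- Measure in a product basis that diagonalizes both marginals. -/
lemma vnEnt_le_vnEnt_mFst_add_vnEnt_mSnd {ω : Matrix (a × b) (a × b) ℂ} (hω : ω.PosSemidef) :
    vnEnt ω ≤ vnEnt (mFst ω) + vnEnt (mSnd ω) := by
  obtain ⟨U, hU, hfst⟩ := exists_unitary_vnEnt_eq (posSemidef_mFst hω).1
  obtain ⟨V, hV, hsnd⟩ := exists_unitary_vnEnt_eq (posSemidef_mSnd hω).1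
  rw [hfst, hsnd, ← funext (sum_bornDist_kronecker_right ω U hV),
    ← funext (sum_bornDist_kronecker_left ω V hU)]
  exact (vnEnt_le_shannonEnt_bornDist hω (kronecker_mem_unitary hU hV)).trans
    (shannonEnt_le_add_marginals (bornDist_nonneg hω _))

/-- **Araki–Lieb inequality**, by purification: a factorization `ω = Y Yᴴ` is a pure state on
`b × (a × (a × b))`, so the complement of `b` has the entropy of `mSnd ω`, while its own marginals
have those of `mFst ω` and `ω`. -/
lemma vnEnt_mSnd_le {ω : Matrix (a × b) (a × b) ℂ} (hω : ω.PosSemidef) :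
    vnEnt (mSnd ω) ≤ vnEnt (mFst ω) + vnEnt ω := by
  obtain ⟨Y, hY⟩ := exists_eq_mul_conjTranspose_of_posSemidef hω
  let X : Matrix b (a × (a × b)) ℂ := of fun j x => Y (x.1, j) x.2
  have hXX : X * Xᴴ = mSnd ω := by
    ext j j'
    simp [X, hY, mSnd, mul_apply, Fintype.sum_prod_type]
  have hfst : mFst (Xᴴ * X) = (mFst ω)ᵀ := by
    ext i i'
    simp only [X, hY, mFst, of_apply, mul_apply, conjTranspose_apply, transpose_apply]
    rw [Finset.sum_comm]
    simp only [mul_comm]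
  have hsnd : mSnd (Xᴴ * X) = Yᴴ * Y := by
    ext k k'
    simp [X, mSnd, mul_apply, Fintype.sum_prod_type]
  calc vnEnt (mSnd ω) = vnEnt (Xᴴ * X) := by rw [← hXX, vnEnt_mul_conjTranspose_comm]
    _ ≤ vnEnt (mFst (Xᴴ * X)) + vnEnt (mSnd (Xᴴ * X)) :=
        vnEnt_le_vnEnt_mFst_add_vnEnt_mSnd (posSemidef_conjTranspose_mul_self X)
    _ = vnEnt (mFst ω) + vnEnt ω := by
        rw [hfst, hsnd, vnEnt_transpose (posSemidef_mFst hω).1, ← vnEnt_mul_conjTranspose_comm,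
          ← hY]

end PartialTrace

section MutualInformation

variable {a b : Type*} [Fintype a] [DecidableEq a] [Fintype b] [DecidableEq b]
  {ω σ : Matrix (a × b) (a × b) ℂ}

lemma mutInf_nonneg (hω : ω.PosSemidef) : 0 ≤ mutInf ω :=
  sub_nonneg.2 (vnEnt_le_vnEnt_mFst_add_vnEnt_mSnd hω)

lemma mutInf_le_two_mul_trace_mul_log_card (hω : ω.PosSemidef) :
    mutInf ω ≤ 2 * ω.trace.re * Real.log (Fintype.card a) := by
  have hfst := vnEnt_le_trace_mul_log_card (posSemidef_mFst hω)
  have hsnd := vnEnt_mSnd_le hω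
  rw [trace_mFst] at hfst
  rw [mutInf]
  linarith

lemma mutInf_add_le (hω : ω.PosSemidef) (hσ : σ.PosSemidef) :
    mutInf (ω + σ) ≤ mutInf ω + mutInf σ + 2 * shannonEnt ![ω.trace.re, σ.trace.re] := by
  have hfst := vnEnt_add_le (posSemidef_mFst hω) (posSemidef_mFst hσ)
  have hsnd := vnEnt_add_le (posSemidef_mSnd hω) (posSemidef_mSnd hσ)
  have hjoint := vnEnt_add_vnEnt_le hω hσ
  rw [trace_mFst, trace_mFst] at hfst
  rw [trace_mSnd, trace_mSnd] at hsnd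
  simp only [mutInf, mFst_add, mSnd_add]
  linarith

lemma mutInf_add_mutInf_le (hω : ω.PosSemidef) (hσ : σ.PosSemidef) :
    mutInf ω + mutInf σ ≤ mutInf (ω + σ) + shannonEnt ![ω.trace.re, σ.trace.re] := by
  have hfst := vnEnt_add_vnEnt_le (posSemidef_mFst hω) (posSemidef_mFst hσ)
  have hsnd := vnEnt_add_vnEnt_le (posSemidef_mSnd hω) (posSemidef_mSnd hσ)
  have hjoint := vnEnt_add_le hω hσ
  simp only [mutInf, mFst_add, mSnd_add]
  linarith

lemma mutInf_sub_mutInf_le_of_add_eq_add {ρ π ν : Matrix (a × b) (a × b) ℂ} (hω : ω.PosSemidef)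
    (hρ : ρ.PosSemidef) (hπ : π.PosSemidef) (hν : ν.PosSemidef) (h : ω + ν = ρ + π) :
    mutInf ω - mutInf ρ ≤ 2 * π.trace.re * Real.log (Fintype.card a)
      + 2 * shannonEnt ![ρ.trace.re, π.trace.re] + shannonEnt ![ω.trace.re, ν.trace.re] := by
  have lower := mutInf_add_mutInf_le hω hν
  have upper := mutInf_add_le hρ hπ
  have hν_nonneg := mutInf_nonneg hν
  have hπ_le := mutInf_le_two_mul_trace_mul_log_card hπ
  rw [h] at lower
  linarith

theorem mutInf_continuity_bound_general {ω₁ ω₂ : Matrix (a × b) (a × b) ℂ} (h₁ : ω₁.PosSemidef)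
    (h₂ : ω₂.PosSemidef) (htr : ω₁.trace = ω₂.trace) :
    |mutInf ω₁ - mutInf ω₂|
      ≤ 2 * (traceNorm (ω₁ - ω₂) / 2) * Real.log (Fintype.card a)
        + 3 * (ω₁.trace.re + traceNorm (ω₁ - ω₂) / 2) *
            Real.binEntropy
              ((traceNorm (ω₁ - ω₂) / 2) / (ω₁.trace.re + traceNorm (ω₁ - ω₂) / 2)) := by
  obtain ⟨P, N, hP, hN, hPN, hPtr, hNtr⟩ :=
    exists_posSemidef_sub_eq_of_trace_eq_zero (h₁.1.sub h₂.1) (by rw [trace_sub, htr, sub_self])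
  have hsum : ω₁ + N = ω₂ + P :=
    (sub_eq_sub_iff_add_eq_add.1 hPN.symm).trans (add_comm P ω₂)
  have hle := mutInf_sub_mutInf_le_of_add_eq_add h₁ h₂ hP hN hsum
  have hge := mutInf_sub_mutInf_le_of_add_eq_add h₂ h₁ hN hP hsum.symm
  rw [hPtr, hNtr, ← htr, shannonEnt_pair] at hle hge
  rw [abs_sub_le_iff]
  constructor <;> linarith

end MutualInformation

/-- Continuity bound for the quantum mutual information:
`|I(A:B)_{ω¹} − I(A:B)_{ω²}| ≤ 2ε log dim H_A + 3(1+ε)h₂(ε/(1+ε))` when `ε = ½‖ω¹−ω²‖₁ < 1`. -/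
theorem mutInf_continuity_bound {a b : Type*} [Fintype a] [DecidableEq a] [Fintype b]
    [DecidableEq b] (ω₁ ω₂ : Matrix (a × b) (a × b) ℂ) (h1 : IsState ω₁) (h2 : IsState ω₂)
    (hε : traceNorm (ω₁ - ω₂) / 2 < 1) :
    |mutInf ω₁ - mutInf ω₂|
      ≤ 2 * (traceNorm (ω₁ - ω₂) / 2) * Real.log (Fintype.card a)
        + 3 * (1 + traceNorm (ω₁ - ω₂) / 2) *
            Real.binEntropy ((traceNorm (ω₁ - ω₂) / 2) / (1 + traceNorm (ω₁ - ω₂) / 2)) := by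
  simpa [h1.2] using mutInf_continuity_bound_general h1.1 h2.1 (h1.2.trans h2.2.symm)
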